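/- Let p ∈ [1,∞), let ρ : ℝ^N → ℝ be continuous and strictly positive with ∫_{ℝ^N} ρ(x) dx = 1, suppose K > 0 satisfies sup{ρ(x) : |x−y| ≤ 1} ≤ K ρ(y) for every y ∈ ℝ^N, and let β > 0. Let J ∈ C¹(ℝ^N) be nonnegative, even, supported in the closed unit ball with ∫ J = 1; let g ∈ C¹(ℝ) satisfy g(0) = 0, |g(s)| ≤ a for all s, g globally Lipschitz, and g' globally Lipschitz. For each ε ∈ [0,1] let h_ε : ℝ → [0,h*) be continuous, and assume h_ε → h_0 uniformly on ℝ as ε → 0⁺. Let S_ε(t,τ) denote the solution process of u(t) = e^{−(t−τ)}u_τ + ∫_τ^t e^{−(t−s)} g(β(J*u(s)) + β h_ε(s)) ds in L^p(ℝ^N,ρ), and let A_ε(t) := ⋂_{s ≤ t} closure(⋃_{τ ≤ s} S_ε(t,τ)B(0,a+1)) be the corresponding pullback attractor sections. Then for every t ∈ ℝ, lim_{ε→0⁺} sup_{x ∈ A_ε(t)} dist(x, A_0(t)) = 0, i.e. the pullback attractors are upper semicontinuous at ε = 0. -/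

import Mathlib

open MeasureTheory Set
open scoped ENNReal

noncomputable section

abbrev Euc (N : ℕ) := EuclideanSpace ℝ (Fin N)

/-- Weighted `L^p` norm `(∫ ρ |u|^p)^{1/p}`. -/
def wnorm {N : ℕ} (p : ℝ) (ρ u : Euc N → ℝ) : ℝ :=
  (∫ x, ρ x * |u x| ^ p) ^ (1 / p)

/-- Convolution `(J*u)(x) = ∫ J(x-y) u(y) dy`. -/
def conv {N : ℕ} (J u : Euc N → ℝ) (x : Euc N) : ℝ :=
  ∫ y, J (x - y) * u y

/-- Membership in the weighted Lebesgue space `L^p(ℝ^N, ρ)`. -/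
def MemWLp {N : ℕ} (p : ℝ) (ρ u : Euc N → ℝ) : Prop :=
  AEStronglyMeasurable u volume ∧ Integrable fun x => ρ x * |u x| ^ p

/-- `u` satisfies the variation-of-constants identity on `[τ, ∞)` with initial datum `uτ`. -/
def IsSolution {N : ℕ} (J : Euc N → ℝ) (g : ℝ → ℝ) (h : ℝ → ℝ → ℝ) (β τ : ℝ)
    (uτ : Euc N → ℝ) (u : ℝ → Euc N → ℝ) : Prop :=
  ∀ t ≥ τ, ∀ x, u t x = Real.exp (-(t - τ)) * uτ x +
    ∫ s in τ..t, Real.exp (-(t - s)) * g (β * conv J (u s) x + β * h s (u s x))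

/-- The weighted measure `ρ(x) dx` on `ℝ^N`. -/
def wMeasure {N : ℕ} (ρ : Euc N → ℝ) : Measure (Euc N) :=
  volume.withDensity fun x => ENNReal.ofReal (ρ x)

/-- The image at time `t` under the process of the closed ball of radius `r`
taken at initial time `τ`, i.e. `S(t,τ) B(0,r)`, as a subset of `L^p(ℝ^N,ρ)`. -/
def procSet {N : ℕ} (p : ℝ≥0∞) (ρ J : Euc N → ℝ) (g : ℝ → ℝ) (h : ℝ → ℝ)
    (β r t τ : ℝ) : Set (Lp ℝ p (wMeasure ρ)) :=
  {w | ∃ (u : ℝ → Euc N → ℝ) (uτ : Euc N → ℝ),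
      MemWLp p.toReal ρ uτ ∧ wnorm p.toReal ρ uτ ≤ r ∧
      (∀ t' ≥ τ, MemWLp p.toReal ρ (u t')) ∧
      IsSolution J g (fun s _ => h s) β τ uτ u ∧
      ⇑w =ᵐ[wMeasure ρ] u t}

/-- The pullback omega-limit set `A(t) = ⋂_{s ≤ t} closure (⋃_{τ ≤ s} S(t,τ) B(0,r))`. -/
def attrSet {N : ℕ} (p : ℝ≥0∞) [Fact (1 ≤ p)] (ρ J : Euc N → ℝ) (g : ℝ → ℝ) (h : ℝ → ℝ)
    (β r t : ℝ) : Set (Lp ℝ p (wMeasure ρ)) :=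
  ⋂ s ∈ Iic t, closure (⋃ τ ∈ Iic s, procSet p ρ J g h β r t τ)

open Filter Topology

/- The state of a trajectory started at time `τ` is `e^{-(t-τ)}` times its initial datum plus a
response, the exponentially weighted average of the bounded input `g(β J*u + β h)` over the past, so
the initial datum is forgotten as `τ → -∞`. Responses are bounded and Lipschitz in time, hence their
convolutions with `J` are equicontinuous in time and space, and by Arzelà–Ascoli they converge
pointwise along a subsequence. Dominated convergence then carries the inputs, and with them the
responses, to a bounded solution of the limit equation defined for all times. Such a solution lies
in the absorbing ball at every time, so it belongs to the limit attractor, and since `ρ dx` is a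
finite measure, bounded pointwise convergence is convergence in `L^p`. -/

theorem measurable_of_continuousWithinAt_Iic {f : ℝ → ℝ}
    (hf : ∀ s, ContinuousWithinAt f (Iic s) s) : Measurable f := by
  let approx (n : ℕ) (s : ℝ) : ℝ := ⌊(n + 1) * s⌋ / (n + 1)
  have approx_le (n : ℕ) (s : ℝ) : approx n s ≤ s := by
    rw [div_le_iff₀' (by positivity)]
    exact Int.floor_le _
  have le_approx (n : ℕ) (s : ℝ) : s - 1 / (n + 1) ≤ approx n s := by
    rw [le_div_iff₀' (by positivity), mul_sub, mul_one_div_cancel (by positivity)]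
    exact (Int.sub_one_lt_floor _).le
  have tendsto_approx (s : ℝ) : Tendsto (approx · s) atTop (𝓝 s) := by
    refine tendsto_of_tendsto_of_tendsto_of_le_of_le ?_ tendsto_const_nhds
      (fun n => le_approx n s) (fun n => approx_le n s)
    simpa only [sub_zero] using
      (tendsto_one_div_add_atTop_nhds_zero_nat (𝕜 := ℝ)).const_sub s
  refine measurable_of_tendsto_metrizable (f := fun n s => f (approx n s)) (fun n => ?_)
    (tendsto_pi_nhds.2 fun s => (hf s).tendsto.comp
      (tendsto_nhdsWithin_iff.2 ⟨tendsto_approx s, .of_forall fun n => approx_le n s⟩))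
  exact (measurable_from_top (f := fun k : ℤ => f (k / (n + 1)))).comp
    (Int.measurable_floor.comp (measurable_const_mul _))

theorem aestronglyMeasurable_Iio_of_forall_lt {f : ℝ → ℝ} {s : ℝ}
    (hf : ∀ b < s, AEStronglyMeasurable f (volume.restrict (Iic b))) :
    AEStronglyMeasurable f (volume.restrict (Iio s)) := by
  obtain ⟨b, -, b_lt, b_lim⟩ := exists_seq_strictMono_tendsto s
  rw [← iUnion_Iic_eq_Iio_of_lt_of_tendsto b_lt b_lim]
  exact aestronglyMeasurable_iUnion_iff.2 fun n => hf _ (b_lt n)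

/- If `f` is not measurable to the left of `s`, its primitive takes the junk value `0` there. -/
theorem continuousWithinAt_Iic_primitive_of_norm_le {f g : ℝ → ℝ} {s : ℝ}
    (hg : IntegrableOn g (Iic s)) (hfg : ∀ r, ‖f r‖ ≤ g r) :
    ContinuousWithinAt (fun b => ∫ r in Iic b, f r) (Iic s) s := by
  by_cases hf : AEStronglyMeasurable f (volume.restrict (Iio s))
  · have hf_int : IntegrableOn f (Iio s) :=
      (hg.mono_set Iio_subset_Iic_self).mono' hf (.of_forall hfg)
    simpa only [integral_Iic_eq_integral_Iio] using hf_int.continuousWithinAt_Iic_primitive_Iio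
  · obtain ⟨b, hbs, hb⟩ : ∃ b < s, ¬ AEStronglyMeasurable f (volume.restrict (Iic b)) := by
      by_contra! h
      exact hf (aestronglyMeasurable_Iio_of_forall_lt h)
    have primitive_eq_zero {c : ℝ} (hbc : b ≤ c) : ∫ r in Iic c, f r = 0 :=
      integral_non_aestronglyMeasurable fun hc =>
        hb (hc.mono_measure (Measure.restrict_mono (Iic_subset_Iic.2 hbc) le_rfl))
    refine continuousWithinAt_const (b := (0 : ℝ)) |>.congr_of_eventuallyEq ?_
      (primitive_eq_zero hbs.le)
    filter_upwards [nhdsWithin_le_nhds (lt_mem_nhds hbs)] with c hc using primitive_eq_zero hc.le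

theorem exists_subseq_tendsto_of_equicontinuous {X α : Type*} [TopologicalSpace X]
    [TopologicalSpace.SeparableSpace X] [PseudoMetricSpace α] [CompleteSpace α] {F : ℕ → X → α}
    (hF : Equicontinuous F) {K : X → Set α} (hK : ∀ x, IsCompact (K x))
    (hFK : ∀ n x, F n x ∈ K x) :
    ∃ φ : ℕ → ℕ, StrictMono φ ∧ ∃ f : X → α, ∀ x, Tendsto (fun n => F (φ n) x) atTop (𝓝 (f x)) := by
  obtain ⟨D, D_countable, D_dense⟩ := TopologicalSpace.exists_countable_dense X
  have := D_countable.to_subtype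
  obtain ⟨f, -, φ, hφ, hf⟩ := (isCompact_univ_pi fun d : D => hK d).isSeqCompact
    (x := fun n d => F n d) fun n d _ => hFK n d
  refine ⟨φ, hφ, Classical.skolem.1 fun x => cauchySeq_tendsto_of_complete ?_⟩
  refine Metric.cauchySeq_iff'.2 fun ε hε => ?_
  obtain ⟨d, d_close, hd⟩ : ∃ d, (∀ n, dist (F n x) (F n d) < ε / 3) ∧ d ∈ D :=
    mem_closure_iff_nhds.1 (D_dense x) _
      (Metric.equicontinuousAt_iff_right.1 (hF x) _ (by positivity))
  obtain ⟨n₀, hn₀⟩ := Metric.cauchySeq_iff'.1 (tendsto_pi_nhds.1 hf ⟨d, hd⟩).cauchySeq (ε / 3)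
    (by positivity)
  refine ⟨n₀, fun n hn => ?_⟩
  calc dist (F (φ n) x) (F (φ n₀) x)
      ≤ dist (F (φ n) x) (F (φ n) d) + dist (F (φ n) d) (F (φ n₀) d)
          + dist (F (φ n₀) d) (F (φ n₀) x) := dist_triangle4 _ _ _ _
    _ < ε / 3 + ε / 3 + ε / 3 := by
      gcongr
      · exact d_close _
      · exact hn₀ n hn
      · rw [dist_comm]; exact d_close _
    _ = ε := by ring

theorem tendsto_eLpNorm_sub_of_bounded {α E : Type*} [MeasurableSpace α] {μ : Measure α}
    [IsFiniteMeasure μ] [NormedAddCommGroup E] {p : ℝ≥0∞} (hp : 1 ≤ p) (hp' : p ≠ ⊤)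
    {f : ℕ → α → E} {f₀ : α → E} {a : ℝ} (hf : ∀ n, AEStronglyMeasurable (f n) μ)
    (hfa : ∀ n x, ‖f n x‖ ≤ a) (hf₀ : ∀ x, Tendsto (fun n => f n x) atTop (𝓝 (f₀ x))) :
    Tendsto (fun n => eLpNorm (f n - f₀) p μ) atTop (𝓝 0) := by
  have hf₀_meas : AEStronglyMeasurable f₀ μ :=
    aestronglyMeasurable_of_tendsto_ae atTop hf (.of_forall hf₀)
  have hf₀a : ∀ x, ‖f₀ x‖ ≤ a := fun x =>
    le_of_tendsto (hf₀ x).norm (.of_forall fun n => hfa n x)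
  refine tendsto_Lp_finite_of_tendsto_ae hp hp' hf (.of_bound hf₀_meas a (.of_forall hf₀a))
    (unifIntegrable_of hp hp' hf fun ε _ => ⟨(a + 1).toNNReal, fun n => ?_⟩) (.of_forall hf₀)
  have level_set_empty : {x | (a + 1).toNNReal ≤ ‖f n x‖₊} = ∅ := by
    refine eq_empty_of_forall_notMem fun x hx => ?_
    have : a + 1 ≤ ‖f n x‖ := Real.toNNReal_le_iff_le_coe.1 hx
    linarith [hfa n x]
  simp only [level_set_empty, indicator_empty, eLpNorm_zero', zero_le]

/-- The state at time `s` of the scalar equation `v' = -v + G` started at `-∞`: the input `G`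
averaged over the past with the exponentially fading weight `e^{-(s-r)}`. -/
def fadingMemory (G : ℝ → ℝ) (s : ℝ) : ℝ :=
  ∫ r in Iic s, Real.exp (-(s - r)) * G r

theorem exp_neg_sub_mul (s r c : ℝ) :
    Real.exp (-(s - r)) * c = Real.exp (-s) * (Real.exp r * c) := by
  rw [← mul_assoc, ← Real.exp_add]
  ring_nf

theorem fadingMemory_eq (G : ℝ → ℝ) (s : ℝ) :
    fadingMemory G s = Real.exp (-s) * ∫ r in Iic s, Real.exp r * G r := by
  simp only [fadingMemory, exp_neg_sub_mul, integral_const_mul]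

section Bounded

variable {G : ℝ → ℝ} {a : ℝ}

theorem norm_exp_mul_le (hGa : ∀ r, |G r| ≤ a) (r : ℝ) :
    ‖Real.exp r * G r‖ ≤ Real.exp r * a := by
  rw [norm_mul, Real.norm_eq_abs, Real.abs_exp, Real.norm_eq_abs]
  gcongr
  exact hGa r

theorem abs_fadingMemory_le (hGa : ∀ r, |G r| ≤ a) (s : ℝ) : |fadingMemory G s| ≤ a := by
  have integral_le : |∫ r in Iic s, Real.exp r * G r| ≤ Real.exp s * a :=
    calc |∫ r in Iic s, Real.exp r * G r| ≤ ∫ r in Iic s, Real.exp r * a :=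
          norm_integral_le_of_norm_le ((integrableOn_exp_Iic s).mul_const a)
            (.of_forall (norm_exp_mul_le hGa))
      _ = Real.exp s * a := by rw [integral_mul_const, integral_exp_Iic]
  calc |fadingMemory G s| = Real.exp (-s) * |∫ r in Iic s, Real.exp r * G r| := by
        rw [fadingMemory_eq, abs_mul, Real.abs_exp]
    _ ≤ Real.exp (-s) * (Real.exp s * a) := by gcongr
    _ = a := by rw [← mul_assoc, ← Real.exp_add, neg_add_cancel, Real.exp_zero, one_mul]

theorem continuousWithinAt_fadingMemory (hGa : ∀ r, |G r| ≤ a) (s : ℝ) :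
    ContinuousWithinAt (fadingMemory G) (Iic s) s := by
  simp only [funext (fadingMemory_eq G)]
  exact (by fun_prop : Continuous fun s => Real.exp (-s)).continuousWithinAt.mul
    (continuousWithinAt_Iic_primitive_of_norm_le ((integrableOn_exp_Iic s).mul_const a)
      (norm_exp_mul_le hGa))

theorem integrableOn_Iic_exp_mul (hG : Measurable G) (hGa : ∀ r, |G r| ≤ a) (s : ℝ) :
    IntegrableOn (fun r => Real.exp r * G r) (Iic s) :=
  ((integrableOn_exp_Iic s).mul_const a).mono' (by fun_prop) (.of_forall (norm_exp_mul_le hGa))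

theorem fadingMemory_cocycle (hG : Measurable G) (hGa : ∀ r, |G r| ≤ a) (τ s : ℝ) :
    fadingMemory G s =
      Real.exp (-(s - τ)) * fadingMemory G τ + ∫ r in τ..s, Real.exp (-(s - r)) * G r := by
  have increment : ∫ r in τ..s, Real.exp (-(s - r)) * G r = Real.exp (-s) *
      ((∫ r in Iic s, Real.exp r * G r) - ∫ r in Iic τ, Real.exp r * G r) := by
    rw [intervalIntegral.integral_Iic_sub_Iic (integrableOn_Iic_exp_mul hG hGa τ)
      (integrableOn_Iic_exp_mul hG hGa s), ← intervalIntegral.integral_const_mul]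
    simp only [exp_neg_sub_mul]
  have exp_split : Real.exp (-(s - τ)) * Real.exp (-τ) = Real.exp (-s) := by
    rw [← Real.exp_add]; ring_nf
  rw [increment, fadingMemory_eq G s, fadingMemory_eq G τ, ← mul_assoc, exp_split]
  ring

theorem abs_fadingMemory_sub_le (hG : Measurable G) (hGa : ∀ r, |G r| ≤ a) (s s' : ℝ) :
    |fadingMemory G s - fadingMemory G s'| ≤ 2 * a * |s - s'| := by
  wlog h : s' ≤ s generalizing s s'
  · rw [abs_sub_comm, abs_sub_comm s]
    exact this s' s (le_of_not_ge h)
  have decay_le : |Real.exp (-(s - s')) - 1| ≤ |s - s'| := by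
    have exp_le_one : Real.exp (-(s - s')) ≤ 1 := Real.exp_le_one_iff.2 (by linarith)
    rw [abs_sub_comm, abs_of_nonneg (sub_nonneg.2 exp_le_one), abs_of_nonneg (sub_nonneg.2 h)]
    linarith [Real.add_one_le_exp (-(s - s'))]
  have increment_le : |∫ r in s'..s, Real.exp (-(s - r)) * G r| ≤ a * |s - s'| := by
    refine intervalIntegral.norm_integral_le_of_norm_le_const (E := ℝ) fun r hr => ?_
    rw [uIoc_of_le h] at hr
    rw [norm_mul, Real.norm_eq_abs, Real.abs_exp, Real.norm_eq_abs]
    exact (mul_le_of_le_one_left (abs_nonneg _)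
      (Real.exp_le_one_iff.2 (by linarith [hr.2]))).trans (hGa r)
  calc |fadingMemory G s - fadingMemory G s'|
      = |(Real.exp (-(s - s')) - 1) * fadingMemory G s' +
          ∫ r in s'..s, Real.exp (-(s - r)) * G r| := by
        rw [fadingMemory_cocycle hG hGa s' s]; ring_nf
    _ ≤ |Real.exp (-(s - s')) - 1| * |fadingMemory G s'| +
          |∫ r in s'..s, Real.exp (-(s - r)) * G r| := by
        rw [← abs_mul]; exact abs_add_le _ _
    _ ≤ |s - s'| * a + a * |s - s'| := by
        gcongr
        exact abs_fadingMemory_le hGa s'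
    _ = 2 * a * |s - s'| := by ring

theorem tendsto_fadingMemory {G : ℕ → ℝ → ℝ} {G₀ : ℝ → ℝ} (hG : ∀ n, Measurable (G n))
    (hGa : ∀ n r, |G n r| ≤ a) (hG₀ : ∀ r, Tendsto (fun n => G n r) atTop (𝓝 (G₀ r))) (s : ℝ) :
    Tendsto (fun n => fadingMemory (G n) s) atTop (𝓝 (fadingMemory G₀ s)) := by
  simp only [fadingMemory_eq]
  refine .const_mul _ (tendsto_integral_of_dominated_convergence (fun r => Real.exp r * a)
    (fun n => ?_) ((integrableOn_exp_Iic s).mul_const a) (fun n => ?_)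
    (.of_forall fun r => (hG₀ r).const_mul _))
  · exact (integrableOn_Iic_exp_mul (hG n) (hGa n) s).aestronglyMeasurable
  · exact .of_forall (norm_exp_mul_le (hGa n))

end Bounded

theorem fadingMemory_indicator_Ioi (G : ℝ → ℝ) {τ s : ℝ} (h : τ ≤ s) :
    fadingMemory ((Ioi τ).indicator G) s = ∫ r in τ..s, Real.exp (-(s - r)) * G r := by
  simp only [fadingMemory, ← indicator_mul_right _ (fun r => Real.exp (-(s - r)))]
  rw [setIntegral_indicator measurableSet_Ioi, Iic_inter_Ioi, intervalIntegral.integral_of_le h]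

theorem fadingMemory_indicator_Ioi_eq_zero (G : ℝ → ℝ) {τ s : ℝ} (h : s ≤ τ) :
    fadingMemory ((Ioi τ).indicator G) s = 0 :=
  setIntegral_eq_zero_of_forall_eq_zero fun r hr => by
    simp only [indicator_of_notMem (notMem_Ioi.2 (hr.trans h)), mul_zero]

theorem tendsto_integral_norm_translate_sub {V E : Type*} [NormedAddCommGroup V]
    [MeasurableSpace V] [BorelSpace V] {μ : Measure V} [IsLocallyFiniteMeasure μ]
    [μ.InnerRegularCompactLTTop] [μ.IsAddLeftInvariant] [NormedAddCommGroup E] {f : V → E}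
    (hf : Integrable f μ) :
    Tendsto (fun c => ∫ y, ‖f (c + y) - f y‖ ∂μ) (𝓝 0) (𝓝 0) := by
  have : Fact ((1 : ℝ≥0∞) ≠ ⊤) := ⟨ENNReal.one_ne_top⟩
  have integral_eq_dist (c : V) : ∫ y, ‖f (c + y) - f y‖ ∂μ =
      dist (DomAddAct.mk c +ᵥ hf.toL1 f) (hf.toL1 f) := by
    have hfc := (measurePreserving_add_left μ c).integrable_comp_of_integrable hf
    rw [dist_eq_norm]
    exact (L1.norm_of_fun_eq_integral_norm (hfc.sub hf)).symm
  have orbit_continuous : Continuous fun c : V => DomAddAct.mk c +ᵥ hf.toL1 f :=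
    DomAddAct.continuous_mk.vadd continuous_const
  simpa only [integral_eq_dist, DomAddAct.mk_zero, zero_vadd, dist_self] using
    (orbit_continuous.dist (continuous_const (y := hf.toL1 f))).tendsto 0

section Convolution

variable {N : ℕ} {J : Euc N → ℝ}

theorem conv_const_mul (J u : Euc N → ℝ) (c : ℝ) (x : Euc N) :
    conv J (fun y => c * u y) x = c * conv J u x := by
  simp only [conv, mul_left_comm, integral_const_mul]

theorem conv_add {u w : Euc N → ℝ} {x : Euc N} (hu : Integrable fun y => J (x - y) * u y)
    (hw : Integrable fun y => J (x - y) * w y) :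
    conv J (fun y => u y + w y) x = conv J u x + conv J w x := by
  simp only [conv, mul_add, integral_add hu hw]

theorem norm_kernel_mul_le {w : Euc N → ℝ} {b : ℝ} (hwb : ∀ y, |w y| ≤ b) (x y : Euc N) :
    ‖J (x - y) * w y‖ ≤ ‖J (x - y)‖ * b := by
  rw [norm_mul]
  gcongr
  exact hwb y

theorem integrable_kernel_mul (hJ : Integrable J) {w : Euc N → ℝ} (hw : AEStronglyMeasurable w)
    {b : ℝ} (hwb : ∀ y, |w y| ≤ b) (x : Euc N) : Integrable fun y => J (x - y) * w y :=
  (hJ.comp_sub_left x).mul_bdd hw (.of_forall hwb)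

theorem abs_conv_le (hJ : Integrable J) {w : Euc N → ℝ} {b : ℝ} (hwb : ∀ y, |w y| ≤ b)
    (x : Euc N) : |conv J w x| ≤ (∫ y, ‖J y‖) * b :=
  calc |conv J w x| ≤ ∫ y, ‖J (x - y)‖ * b :=
        norm_integral_le_of_norm_le ((hJ.comp_sub_left x).norm.mul_const b)
          (.of_forall (norm_kernel_mul_le hwb x))
    _ = (∫ y, ‖J y‖) * b := by
        rw [integral_mul_const, integral_sub_left_eq_self (fun y => ‖J y‖) volume x]

theorem tendsto_conv (hJ : Integrable J) {ι : Type*} {l : Filter ι} [l.IsCountablyGenerated]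
    {w : ι → Euc N → ℝ} {w₀ : Euc N → ℝ} {b : ℝ} (hw : ∀ i, AEStronglyMeasurable (w i))
    (hwb : ∀ i y, |w i y| ≤ b) (hw₀ : ∀ y, Tendsto (fun i => w i y) l (𝓝 (w₀ y))) (x : Euc N) :
    Tendsto (fun i => conv J (w i) x) l (𝓝 (conv J w₀ x)) :=
  tendsto_integral_filter_of_dominated_convergence (fun y => ‖J (x - y)‖ * b)
    (.of_forall fun i => (integrable_kernel_mul hJ (hw i) (hwb i) x).aestronglyMeasurable)
    (.of_forall fun i => .of_forall (norm_kernel_mul_le (hwb i) x))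
    ((hJ.comp_sub_left x).norm.mul_const b) (.of_forall fun y => (hw₀ y).const_mul _)

theorem abs_conv_sub_conv_le (hJ : Integrable J) {w w' : Euc N → ℝ}
    (hw : AEStronglyMeasurable w) (hw' : AEStronglyMeasurable w') {b d : ℝ}
    (hwb : ∀ y, |w y| ≤ b) (hwb' : ∀ y, |w' y| ≤ b) (hd : ∀ y, |w y - w' y| ≤ d) (x x' : Euc N) :
    |conv J w x - conv J w' x'| ≤
      (∫ y, ‖J (x - x' + y) - J y‖) * b + (∫ y, ‖J y‖) * d := by
  have space_le : |conv J w x - conv J w x'| ≤ (∫ y, ‖J (x - x' + y) - J y‖) * b := by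
    have increment_integrable : Integrable fun y => J (x - y) - J (x' - y) :=
      (hJ.comp_sub_left x).sub (hJ.comp_sub_left x')
    rw [conv, conv, ← integral_sub (integrable_kernel_mul hJ hw hwb x)
      (integrable_kernel_mul hJ hw hwb x'), ← integral_mul_const,
      ← integral_sub_left_eq_self (fun y => ‖J (x - x' + y) - J y‖ * b) volume x']
    refine norm_integral_le_of_norm_le (G := ℝ) ?_ (.of_forall fun y => ?_)
    · simpa only [sub_add_sub_cancel] using increment_integrable.norm.mul_const b
    · rw [sub_add_sub_cancel, ← sub_mul, norm_mul]
      gcongr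
      exact hwb y
  have time_le : |conv J w x' - conv J w' x'| ≤ (∫ y, ‖J y‖) * d := by
    rw [conv, conv, ← integral_sub (integrable_kernel_mul hJ hw hwb x')
      (integrable_kernel_mul hJ hw' hwb' x')]
    simpa only [conv, mul_sub] using abs_conv_le hJ hd x'
  exact (abs_sub_le _ _ _).trans (add_le_add space_le time_le)

theorem equicontinuous_conv (hJ : Integrable J) {ι : Type*} {w : ι → ℝ → Euc N → ℝ} {b L : ℝ}
    (hw : ∀ i s, AEStronglyMeasurable (w i s)) (hwb : ∀ i s y, |w i s y| ≤ b)
    (hwL : ∀ i s s' y, |w i s y - w i s' y| ≤ L * |s - s'|) :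
    Equicontinuous fun i (z : ℝ × Euc N) => conv J (w i z.1) z.2 := by
  intro z
  let modulus (z' : ℝ × Euc N) : ℝ :=
    (∫ y, ‖J (z.2 - z'.2 + y) - J y‖) * b + (∫ y, ‖J y‖) * (L * |z.1 - z'.1|)
  have dist_le_modulus (z' : ℝ × Euc N) (i : ι) :
      dist (conv J (w i z.1) z.2) (conv J (w i z'.1) z'.2) ≤ modulus z' := by
    rw [Real.dist_eq]
    exact abs_conv_sub_conv_le hJ (hw i _) (hw i _) (hwb i _) (hwb i _) (hwL i _ _) _ _
  refine Metric.equicontinuousAt_of_continuity_modulus modulus ?_ _ (.of_forall dist_le_modulus)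
  have space_lim : Tendsto (fun z' : ℝ × Euc N => z.2 - z'.2) (𝓝 z) (𝓝 0) :=
    (by fun_prop : Continuous fun z' : ℝ × Euc N => z.2 - z'.2).tendsto' _ _ (sub_self _)
  have time_lim : Tendsto (fun z' : ℝ × Euc N => L * |z.1 - z'.1|) (𝓝 z) (𝓝 0) :=
    (by fun_prop : Continuous fun z' : ℝ × Euc N => L * |z.1 - z'.1|).tendsto' _ _ (by simp)
  simpa only [Function.comp_apply, zero_mul, mul_zero, add_zero] using
    (((tendsto_integral_norm_translate_sub hJ).comp space_lim).mul_const b).add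
      (time_lim.const_mul (∫ y, ‖J y‖))

end Convolution

section Trajectories

variable {N : ℕ} {J : Euc N → ℝ} {g h : ℝ → ℝ} {β a : ℝ}

/-- The nonlinear input `g(β J*u + β h)` at the point `x`, as a function of time, switched on at
the initial time `τ`. -/
def forcing (J : Euc N → ℝ) (g h : ℝ → ℝ) (β τ : ℝ) (u : ℝ → Euc N → ℝ) (x : Euc N) : ℝ → ℝ :=
  (Ioi τ).indicator fun r => g (β * conv J (u r) x + β * h r)

/-- The part of the variation-of-constants formula that remains for zero initial datum. It is
extended by `0` to times before `τ`, so that solutions with different initial times can be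
compared on all of `ℝ`. -/
def response (J : Euc N → ℝ) (g h : ℝ → ℝ) (β τ : ℝ) (u : ℝ → Euc N → ℝ) (s : ℝ) (x : Euc N) : ℝ :=
  fadingMemory (forcing J g h β τ u x) s

/-- `u` solves the equation on `[τ, ∞)` with initial datum `uτ`, and is regular enough for all
convolutions with `J` to make sense. Measurability of `u` in time is not part of the notion. -/
structure IsTrajectory (J : Euc N → ℝ) (g h : ℝ → ℝ) (β τ : ℝ) (uτ : Euc N → ℝ)
    (u : ℝ → Euc N → ℝ) : Prop where
  integrable_kernel : ∀ x, Integrable fun y => J (x - y) * uτ y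
  aestronglyMeasurable : ∀ t ≥ τ, AEStronglyMeasurable (u t)
  isSolution : IsSolution J g (fun s _ => h s) β τ uτ u

/-- A solution on the whole time axis without any contribution from the state at time `-∞`; for
bounded `g` these are the bounded solutions defined for all times. -/
structure IsEntireSolution (J : Euc N → ℝ) (g h : ℝ → ℝ) (β : ℝ) (v : ℝ → Euc N → ℝ) : Prop where
  aestronglyMeasurable : ∀ s, AEStronglyMeasurable (v s)
  eq_fadingMemory : ∀ s x, v s x = fadingMemory (fun r => g (β * conv J (v r) x + β * h r)) s

theorem abs_forcing_le (hga : ∀ s, |g s| ≤ a) (τ : ℝ) (u : ℝ → Euc N → ℝ) (x : Euc N) (r : ℝ) :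
    |forcing J g h β τ u x r| ≤ a :=
  (norm_indicator_le_norm_self (E := ℝ) _ r).trans (hga _)

theorem abs_response_le (hga : ∀ s, |g s| ≤ a) (τ : ℝ) (u : ℝ → Euc N → ℝ) (s : ℝ) (x : Euc N) :
    |response J g h β τ u s x| ≤ a :=
  abs_fadingMemory_le (abs_forcing_le hga τ u x) s

/- The weighted average over the past is left continuous in time, hence measurable, even where the
input itself is not measurable. -/
theorem measurable_conv_fadingMemory (hJ : Integrable J) {G : Euc N → ℝ → ℝ}
    (hGa : ∀ x r, |G x r| ≤ a) (hG : ∀ s, AEStronglyMeasurable fun x => fadingMemory (G x) s)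
    (x : Euc N) : Measurable fun s => conv J (fun y => fadingMemory (G y) s) x :=
  measurable_of_continuousWithinAt_Iic fun s =>
    tendsto_conv hJ hG (fun s y => abs_fadingMemory_le (hGa y) s)
      (fun y => continuousWithinAt_fadingMemory (hGa y) s) x

namespace IsTrajectory

variable {τ : ℝ} {uτ : Euc N → ℝ} {u : ℝ → Euc N → ℝ}

theorem eq_add_response (hu : IsTrajectory J g h β τ uτ u) {s : ℝ} (hs : τ ≤ s) (x : Euc N) :
    u s x = Real.exp (-(s - τ)) * uτ x + response J g h β τ u s x := by
  rw [hu.isSolution s hs x, response, forcing, fadingMemory_indicator_Ioi _ hs]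

theorem initial_eq (hu : IsTrajectory J g h β τ uτ u) : u τ = uτ := by
  ext x
  simp only [hu.isSolution τ le_rfl x, sub_self, neg_zero, Real.exp_zero, one_mul,
    intervalIntegral.integral_same, add_zero]

theorem aestronglyMeasurable_response (hu : IsTrajectory J g h β τ uτ u) (s : ℝ) :
    AEStronglyMeasurable (response J g h β τ u s) := by
  rcases le_total s τ with hs | hs
  · have : response J g h β τ u s = fun _ => 0 :=
      funext fun x => fadingMemory_indicator_Ioi_eq_zero _ hs
    exact this ▸ aestronglyMeasurable_const
  · have : response J g h β τ u s = fun x => u s x - Real.exp (-(s - τ)) * u τ x := by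
      ext x
      rw [hu.eq_add_response hs x, hu.initial_eq, add_sub_cancel_left]
    exact this ▸ (hu.aestronglyMeasurable s hs).sub
      ((hu.aestronglyMeasurable τ le_rfl).const_mul _)

theorem conv_eq (hu : IsTrajectory J g h β τ uτ u) (hJ : Integrable J) (hga : ∀ s, |g s| ≤ a)
    {s : ℝ} (hs : τ ≤ s) (x : Euc N) :
    conv J (u s) x =
      Real.exp (-(s - τ)) * conv J uτ x + conv J (response J g h β τ u s) x := by
  have initial_integrable : Integrable fun y => J (x - y) * (Real.exp (-(s - τ)) * uτ y) := by
    simpa only [mul_left_comm] using (hu.integrable_kernel x).const_mul (Real.exp (-(s - τ)))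
  rw [funext (hu.eq_add_response hs), conv_add initial_integrable
    (integrable_kernel_mul hJ (hu.aestronglyMeasurable_response s) (abs_response_le hga τ u s) x),
    conv_const_mul]

theorem measurable_forcing (hu : IsTrajectory J g h β τ uτ u) (hJ : Integrable J)
    (hg : Measurable g) (hga : ∀ s, |g s| ≤ a) (hh : Measurable h) (x : Euc N) :
    Measurable (forcing J g h β τ u x) := by
  have conv_response_measurable : Measurable fun r => conv J (response J g h β τ u r) x :=
    measurable_conv_fadingMemory hJ (abs_forcing_le hga τ u) hu.aestronglyMeasurable_response x
  have forcing_eq : forcing J g h β τ u x = (Ioi τ).indicator fun r =>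
      g (β * (Real.exp (-(r - τ)) * conv J uτ x + conv J (response J g h β τ u r) x) + β * h r) :=
    indicator_congr fun r hr => by rw [hu.conv_eq hJ hga (le_of_lt hr)]
  rw [forcing_eq]
  exact Measurable.indicator (by fun_prop) measurableSet_Ioi

theorem abs_response_sub_le (hu : IsTrajectory J g h β τ uτ u) (hJ : Integrable J)
    (hg : Measurable g) (hga : ∀ s, |g s| ≤ a) (hh : Measurable h) (s s' : ℝ) (x : Euc N) :
    |response J g h β τ u s x - response J g h β τ u s' x| ≤ 2 * a * |s - s'| :=
  abs_fadingMemory_sub_le (hu.measurable_forcing hJ hg hga hh x) (abs_forcing_le hga τ u x) s s'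

end IsTrajectory

namespace IsEntireSolution

variable {v : ℝ → Euc N → ℝ}

theorem abs_le (hv : IsEntireSolution J g h β v) (hga : ∀ s, |g s| ≤ a) (s : ℝ) (x : Euc N) :
    |v s x| ≤ a :=
  hv.eq_fadingMemory s x ▸ abs_fadingMemory_le (fun _ => hga _) s

theorem isSolution (hv : IsEntireSolution J g h β v) (hJ : Integrable J) (hg : Measurable g)
    (hga : ∀ s, |g s| ≤ a) (hh : Measurable h) (τ : ℝ) :
    IsSolution J g (fun s _ => h s) β τ (v τ) v := by
  intro s _ x
  have conv_measurable : Measurable fun r => conv J (v r) x := by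
    have hG (r : ℝ) : AEStronglyMeasurable fun y =>
        fadingMemory (fun r => g (β * conv J (v r) y + β * h r)) r := by
      simpa only [← hv.eq_fadingMemory] using hv.aestronglyMeasurable r
    simpa only [← hv.eq_fadingMemory] using
      measurable_conv_fadingMemory hJ (fun _ _ => hga _) hG x
  rw [hv.eq_fadingMemory s, hv.eq_fadingMemory τ]
  exact fadingMemory_cocycle (by fun_prop) (fun _ => hga _) τ s

end IsEntireSolution

section Compactness

variable {h : ℕ → ℝ → ℝ} {τ : ℕ → ℝ} {uτ : ℕ → Euc N → ℝ} {u : ℕ → ℝ → Euc N → ℝ}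

theorem exists_subseq_tendsto_conv_response (hJ : Integrable J) (hg : Measurable g)
    (hga : ∀ s, |g s| ≤ a) (hh : ∀ n, Measurable (h n))
    (hu : ∀ n, IsTrajectory J g (h n) β (τ n) (uτ n) (u n)) :
    ∃ φ : ℕ → ℕ, StrictMono φ ∧ ∃ c : ℝ → Euc N → ℝ, ∀ s x,
      Tendsto (fun n => conv J (response J g (h (φ n)) β (τ (φ n)) (u (φ n)) s) x) atTop
        (𝓝 (c s x)) := by
  have conv_equicontinuous := equicontinuous_conv hJ (fun n => (hu n).aestronglyMeasurable_response)
    (fun n => abs_response_le hga (τ n) (u n))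
    (fun n => (hu n).abs_response_sub_le hJ hg hga (hh n))
  obtain ⟨φ, hφ, c, hc⟩ := exists_subseq_tendsto_of_equicontinuous conv_equicontinuous
    (fun _ => isCompact_closedBall 0 ((∫ y, ‖J y‖) * a)) fun n z =>
      mem_closedBall_zero_iff.2 (abs_conv_le hJ (abs_response_le hga (τ n) (u n) z.1) z.2)
  exact ⟨φ, hφ, fun s x => c (s, x), fun s x => hc (s, x)⟩

theorem tendsto_exp_neg_sub_mul_of_abs_le (hτ : Tendsto τ atTop atBot) {c : ℕ → ℝ} {M : ℝ}
    (hc : ∀ n, |c n| ≤ M) (s : ℝ) :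
    Tendsto (fun n => Real.exp (-(s - τ n)) * c n) atTop (𝓝 0) := by
  have exp_lim : Tendsto (fun n => Real.exp (-(s - τ n))) atTop (𝓝 0) := by
    simp only [neg_sub]
    exact Real.tendsto_exp_atBot.comp (tendsto_atBot_add_const_right _ (-s) hτ)
  exact exp_lim.zero_mul_isBoundedUnder_le (isBoundedUnder_of ⟨M, hc⟩)

theorem tendsto_forcing (hJ : Integrable J) (hg : Continuous g) (hga : ∀ s, |g s| ≤ a)
    (hτ : Tendsto τ atTop atBot) (hu : ∀ n, IsTrajectory J g (h n) β (τ n) (uτ n) (u n))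
    {M : Euc N → ℝ} (hM : ∀ n x, |conv J (uτ n) x| ≤ M x) {s η c : ℝ} {x : Euc N}
    (hη : Tendsto (fun n => h n s) atTop (𝓝 η))
    (hc : Tendsto (fun n => conv J (response J g (h n) β (τ n) (u n) s) x) atTop (𝓝 c)) :
    Tendsto (fun n => forcing J g (h n) β (τ n) (u n) x s) atTop (𝓝 (g (β * c + β * η))) := by
  have conv_lim : Tendsto (fun n => Real.exp (-(s - τ n)) * conv J (uτ n) x +
      conv J (response J g (h n) β (τ n) (u n) s) x) atTop (𝓝 c) := by
    simpa only [zero_add] using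
      (tendsto_exp_neg_sub_mul_of_abs_le hτ (fun n => hM n x) s).add hc
  refine ((hg.tendsto _).comp ((conv_lim.const_mul β).add (hη.const_mul β))).congr' ?_
  filter_upwards [hτ.eventually_lt_atBot s] with n hn
  simp only [Function.comp_apply, forcing, indicator_of_mem (mem_Ioi.2 hn),
    (hu n).conv_eq hJ hga hn.le]

theorem exists_subseq_tendsto_isEntireSolution (hJ : Integrable J) (hg : Continuous g)
    (hga : ∀ s, |g s| ≤ a) {h₀ : ℝ → ℝ} (hh : ∀ n, Measurable (h n))
    (hh₀ : ∀ s, Tendsto (fun n => h n s) atTop (𝓝 (h₀ s))) (hτ : Tendsto τ atTop atBot)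
    (hu : ∀ n, IsTrajectory J g (h n) β (τ n) (uτ n) (u n)) {M : Euc N → ℝ}
    (hM : ∀ n x, |conv J (uτ n) x| ≤ M x) :
    ∃ φ : ℕ → ℕ, StrictMono φ ∧ ∃ v, IsEntireSolution J g h₀ β v ∧ ∀ s x,
      Tendsto (fun n => response J g (h (φ n)) β (τ (φ n)) (u (φ n)) s x) atTop (𝓝 (v s x)) := by
  obtain ⟨φ, hφ, c, hc⟩ := exists_subseq_tendsto_conv_response hJ hg.measurable hga hh hu
  let v (s : ℝ) (x : Euc N) : ℝ := fadingMemory (fun r => g (β * c r x + β * h₀ r)) s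
  have response_lim (s : ℝ) (x : Euc N) :
      Tendsto (fun n => response J g (h (φ n)) β (τ (φ n)) (u (φ n)) s x) atTop (𝓝 (v s x)) :=
    tendsto_fadingMemory (fun n => (hu _).measurable_forcing hJ hg.measurable hga (hh _) x)
      (fun n => abs_forcing_le hga _ _ x)
      (fun r => tendsto_forcing hJ hg hga (hτ.comp hφ.tendsto_atTop) (fun n => hu (φ n))
        (fun n => hM (φ n)) ((hh₀ r).comp hφ.tendsto_atTop) (hc r x)) s
  have c_eq (s : ℝ) (x : Euc N) : c s x = conv J (v s) x :=
    tendsto_nhds_unique (hc s x) (tendsto_conv hJ (fun n => (hu _).aestronglyMeasurable_response s)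
      (fun n => abs_response_le hga _ _ s) (response_lim s) x)
  refine ⟨φ, hφ, v, ⟨fun s => ?_, fun s x => ?_⟩, response_lim⟩
  · exact aestronglyMeasurable_of_tendsto_ae atTop
      (fun n => (hu (φ n)).aestronglyMeasurable_response s) (.of_forall (response_lim s))
  · simp only [← c_eq, v]

end Compactness

end Trajectories

theorem integral_norm_le_lpNorm {α E : Type*} [MeasurableSpace α] {μ : Measure α}
    [IsProbabilityMeasure μ] [NormedAddCommGroup E] {p : ℝ≥0∞} (hp : 1 ≤ p) {f : α → E}
    (hf : MemLp f p μ) : ∫ x, ‖f x‖ ∂μ ≤ lpNorm f p μ := by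
  rw [← lpNorm_one_eq_integral_norm hf.1, ← toReal_eLpNorm hf.1, ← toReal_eLpNorm hf.1]
  exact ENNReal.toReal_mono hf.2.ne (eLpNorm_le_eLpNorm_of_exponent_le hp hf.1)

theorem lpNorm_le_of_norm_le {α E : Type*} [MeasurableSpace α] {μ : Measure α}
    [IsProbabilityMeasure μ] [NormedAddCommGroup E] {p : ℝ≥0∞} (hp : p ≠ 0) {f : α → E} {a : ℝ}
    (ha : 0 ≤ a) (hfa : ∀ x, ‖f x‖ ≤ a) : lpNorm f p μ ≤ a :=
  calc lpNorm f p μ ≤ lpNorm (fun _ => a) p μ := lpNorm_mono_real (memLp_const a) hfa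
    _ = a := by
      rw [lpNorm_const hp (IsProbabilityMeasure.ne_zero μ), probReal_univ, Real.one_rpow, mul_one,
        Real.norm_of_nonneg ha]

section WeightedSpace

variable {N : ℕ} {ρ : Euc N → ℝ}

theorem wMeasure_absolutelyContinuous (ρ : Euc N → ℝ) : wMeasure ρ ≪ volume :=
  withDensity_absolutelyContinuous _ _

theorem absolutelyContinuous_wMeasure (hρ : Measurable ρ) (hρpos : ∀ x, 0 < ρ x) :
    volume ≪ wMeasure ρ :=
  withDensity_absolutelyContinuous' (by fun_prop)
    (.of_forall fun x => (ENNReal.ofReal_pos.2 (hρpos x)).ne')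

theorem isProbabilityMeasure_wMeasure (hρ : ∀ x, 0 ≤ ρ x) (hρ1 : ∫ x, ρ x = 1) :
    IsProbabilityMeasure (wMeasure ρ) where
  measure_univ := by
    have hρ_int : Integrable ρ := .of_integral_ne_zero (hρ1 ▸ one_ne_zero)
    rw [wMeasure, withDensity_apply _ .univ, setLIntegral_univ,
      ← ofReal_integral_eq_lintegral_ofReal hρ_int (.of_forall hρ), hρ1, ENNReal.ofReal_one]

theorem integrable_wMeasure_iff (hρ : Measurable ρ) (hρ0 : ∀ x, 0 ≤ ρ x) {f : Euc N → ℝ} :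
    Integrable f (wMeasure ρ) ↔ Integrable fun x => ρ x * f x := by
  rw [wMeasure, integrable_withDensity_iff_integrable_smul' (by fun_prop)
    (.of_forall fun _ => ENNReal.ofReal_lt_top)]
  simp only [ENNReal.toReal_ofReal (hρ0 _), smul_eq_mul]

theorem integral_wMeasure (hρ : Measurable ρ) (hρ0 : ∀ x, 0 ≤ ρ x) (f : Euc N → ℝ) :
    ∫ x, f x ∂(wMeasure ρ) = ∫ x, ρ x * f x := by
  rw [wMeasure, integral_withDensity_eq_integral_toReal_smul (by fun_prop)
    (.of_forall fun _ => ENNReal.ofReal_lt_top)]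
  simp only [ENNReal.toReal_ofReal (hρ0 _), smul_eq_mul]

theorem memWLp_iff_memLp (hρ : Measurable ρ) (hρpos : ∀ x, 0 < ρ x) {p : ℝ≥0∞} (hp₀ : p ≠ 0)
    (hp : p ≠ ⊤) {u : Euc N → ℝ} : MemWLp p.toReal ρ u ↔ MemLp u p (wMeasure ρ) := by
  have integrable_iff (hu : AEStronglyMeasurable u (wMeasure ρ)) :
      (Integrable fun x => ρ x * |u x| ^ p.toReal) ↔ MemLp u p (wMeasure ρ) := by
    rw [← integrable_norm_rpow_iff hu hp₀ hp, integrable_wMeasure_iff hρ fun x => (hρpos x).le]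
    rfl
  exact ⟨fun hu => (integrable_iff (hu.1.mono_ac (wMeasure_absolutelyContinuous ρ))).1 hu.2,
    fun hu => ⟨hu.1.mono_ac (absolutelyContinuous_wMeasure hρ hρpos), (integrable_iff hu.1).2 hu⟩⟩

theorem lpNorm_wMeasure (hρ : Measurable ρ) (hρ0 : ∀ x, 0 ≤ ρ x) {p : ℝ≥0∞} (hp₀ : p ≠ 0)
    (hp : p ≠ ⊤) {u : Euc N → ℝ} (hu : AEStronglyMeasurable u (wMeasure ρ)) :
    lpNorm u p (wMeasure ρ) = wnorm p.toReal ρ u := by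
  rw [lpNorm_eq_integral_norm_rpow_toReal hp₀ hp hu, integral_wMeasure hρ hρ0, wnorm, one_div]
  rfl

variable {J : Euc N → ℝ}

theorem exists_abs_kernel_le_mul (hρ : Continuous ρ) (hρpos : ∀ x, 0 < ρ x) (hJ : Continuous J)
    (hJc : HasCompactSupport J) (x : Euc N) : ∃ C, 0 ≤ C ∧ ∀ y, |J (x - y)| ≤ C * ρ y := by
  have quotient_compact : HasCompactSupport fun y => J (x - y) * (ρ y)⁻¹ :=
    (hJc.comp_homeomorph (Homeomorph.subLeft x)).mul_right
  have quotient_continuous : Continuous fun y => J (x - y) * (ρ y)⁻¹ :=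
    (hJ.comp (continuous_const.sub continuous_id)).mul (hρ.inv₀ fun y => (hρpos y).ne')
  obtain ⟨C, hC⟩ := quotient_compact.exists_bound_of_continuous quotient_continuous
  refine ⟨C, (norm_nonneg _).trans (hC 0), fun y => ?_⟩
  rw [← div_le_iff₀ (hρpos y)]
  simpa only [Real.norm_eq_abs, abs_mul, abs_inv, abs_of_pos (hρpos y), div_eq_mul_inv] using hC y

theorem integrable_kernel_mul_of_integrable (hρ : Continuous ρ) (hρpos : ∀ x, 0 < ρ x)
    (hJ : Continuous J) (hJc : HasCompactSupport J) {u : Euc N → ℝ}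
    (hu : Integrable u (wMeasure ρ)) (x : Euc N) : Integrable fun y => J (x - y) * u y := by
  obtain ⟨C, -, hC⟩ := exists_abs_kernel_le_mul hρ hρpos hJ hJc x
  have hu_meas : AEStronglyMeasurable u :=
    hu.1.mono_ac (absolutelyContinuous_wMeasure hρ.measurable hρpos)
  refine (((integrable_wMeasure_iff hρ.measurable fun y => (hρpos y).le).1 hu.norm).const_mul
    C).mono' ((by fun_prop : Continuous fun y => J (x - y)).aestronglyMeasurable.mul hu_meas)
    (.of_forall fun y => ?_)
  rw [norm_mul, ← mul_assoc]
  gcongr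
  exact hC y

theorem exists_abs_conv_le_mul_integral (hρ : Continuous ρ) (hρpos : ∀ x, 0 < ρ x)
    (hJ : Continuous J) (hJc : HasCompactSupport J) (x : Euc N) :
    ∃ C, 0 ≤ C ∧ ∀ u, Integrable u (wMeasure ρ) →
      |conv J u x| ≤ C * ∫ y, ‖u y‖ ∂(wMeasure ρ) := by
  obtain ⟨C, hC₀, hC⟩ := exists_abs_kernel_le_mul hρ hρpos hJ hJc x
  refine ⟨C, hC₀, fun u hu => ?_⟩
  have hρ0 : ∀ y, 0 ≤ ρ y := fun y => (hρpos y).le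
  rw [integral_wMeasure hρ.measurable hρ0, ← integral_const_mul]
  refine norm_integral_le_of_norm_le (G := ℝ)
    (((integrable_wMeasure_iff hρ.measurable hρ0).1 hu.norm).const_mul C) (.of_forall fun y => ?_)
  rw [norm_mul, ← mul_assoc]
  gcongr
  exact hC y

end WeightedSpace

section Attractors

variable {N : ℕ} {p : ℝ≥0∞} {ρ J : Euc N → ℝ} {g : ℝ → ℝ} {β a r : ℝ}

theorem tendsto_eLpNorm_sub_of_tendsto_response {μ : Measure (Euc N)} [IsFiniteMeasure μ]
    (hμ : μ ≪ volume) (hp₁ : 1 ≤ p) (hp : p ≠ ⊤) (hga : ∀ s, |g s| ≤ a) {h : ℕ → ℝ → ℝ}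
    {τ : ℕ → ℝ} (hτ : Tendsto τ atTop atBot) {uτ : ℕ → Euc N → ℝ} {u : ℕ → ℝ → Euc N → ℝ}
    (hu : ∀ n, IsTrajectory J g (h n) β (τ n) (uτ n) (u n)) (huτ : ∀ n, MemLp (uτ n) p μ)
    (hr : ∀ n, lpNorm (uτ n) p μ ≤ r) {s : ℝ} {v : Euc N → ℝ}
    (hv : ∀ x, Tendsto (fun n => response J g (h n) β (τ n) (u n) s x) atTop (𝓝 (v x))) :
    Tendsto (fun n => eLpNorm (u n s - v) p μ) atTop (𝓝 0) := by
  have response_meas (n : ℕ) :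
      AEStronglyMeasurable (response J g (h n) β (τ n) (u n) s) μ :=
    ((hu n).aestronglyMeasurable_response s).mono_ac hμ
  have v_meas : AEStronglyMeasurable v μ :=
    aestronglyMeasurable_of_tendsto_ae atTop response_meas (.of_forall hv)
  have response_lim :=
    tendsto_eLpNorm_sub_of_bounded hp₁ hp response_meas
      (fun n => abs_response_le hga (τ n) (u n) s) hv
  have initial_lim : Tendsto
      (fun n => ENNReal.ofReal (Real.exp (-(s - τ n)) * lpNorm (uτ n) p μ)) atTop (𝓝 0) :=
    ENNReal.ofReal_zero ▸ ENNReal.tendsto_ofReal (tendsto_exp_neg_sub_mul_of_abs_le hτ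
      (fun n => (abs_of_nonneg lpNorm_nonneg).trans_le (hr n)) s)
  refine tendsto_of_tendsto_of_tendsto_of_le_of_le' tendsto_const_nhds
    (by simpa only [add_zero] using initial_lim.add response_lim)
    (.of_forall fun _ => zero_le) ?_
  filter_upwards [hτ.eventually_le_atBot s] with n hn
  have decomposition : u n s - v =
      Real.exp (-(s - τ n)) • uτ n + (response J g (h n) β (τ n) (u n) s - v) := by
    ext x
    simp only [Pi.sub_apply, Pi.add_apply, Pi.smul_apply, smul_eq_mul,
      (hu n).eq_add_response hn x, add_sub_assoc]
  have initial_eLpNorm : eLpNorm (Real.exp (-(s - τ n)) • uτ n) p μ =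
      ENNReal.ofReal (Real.exp (-(s - τ n)) * lpNorm (uτ n) p μ) := by
    rw [eLpNorm_const_smul, Real.enorm_eq_ofReal (Real.exp_pos _).le, ← ofReal_lpNorm (huτ n),
      ENNReal.ofReal_mul (Real.exp_pos _).le]
  rw [decomposition, ← initial_eLpNorm]
  exact eLpNorm_add_le ((huτ n).1.const_smul _) ((response_meas n).sub v_meas) hp₁

theorem exists_isTrajectory_of_mem_procSet [IsProbabilityMeasure (wMeasure ρ)]
    (hp₁ : 1 ≤ p) (hp : p ≠ ⊤) (hρ : Continuous ρ) (hρpos : ∀ x, 0 < ρ x) (hJ : Continuous J)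
    (hJc : HasCompactSupport J) {h : ℝ → ℝ} {t τ : ℝ} {w : Lp ℝ p (wMeasure ρ)}
    (hw : w ∈ procSet p ρ J g h β r t τ) :
    ∃ uτ u, IsTrajectory J g h β τ uτ u ∧ MemLp uτ p (wMeasure ρ) ∧
      lpNorm uτ p (wMeasure ρ) ≤ r ∧ w =ᵐ[wMeasure ρ] u t := by
  have hp₀ : p ≠ 0 := (zero_lt_one.trans_le hp₁).ne'
  obtain ⟨u, uτ, huτ, hr, hu, hsol, hwu⟩ := hw
  have huτ_memLp := (memWLp_iff_memLp hρ.measurable hρpos hp₀ hp).1 huτ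
  refine ⟨uτ, u, ⟨fun x => ?_, fun t' ht' => (hu t' ht').1, hsol⟩, huτ_memLp, ?_, hwu⟩
  · exact integrable_kernel_mul_of_integrable hρ hρpos hJ hJc (huτ_memLp.integrable hp₁) x
  · rwa [lpNorm_wMeasure hρ.measurable (fun x => (hρpos x).le) hp₀ hp huτ_memLp.1]

theorem IsEntireSolution.memLp {μ : Measure (Euc N)} [IsFiniteMeasure μ] (hμ : μ ≪ volume)
    {h : ℝ → ℝ} {v : ℝ → Euc N → ℝ} (hv : IsEntireSolution J g h β v) (hga : ∀ s, |g s| ≤ a)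
    (s : ℝ) : MemLp (v s) p μ :=
  .of_bound ((hv.aestronglyMeasurable s).mono_ac hμ) a (.of_forall (hv.abs_le hga s))

theorem IsEntireSolution.mem_procSet [IsProbabilityMeasure (wMeasure ρ)] (hp₀ : p ≠ 0)
    (hp : p ≠ ⊤) (hρ : Measurable ρ) (hρpos : ∀ x, 0 < ρ x) (hJ : Integrable J)
    (hg : Measurable g) (hga : ∀ s, |g s| ≤ a) (har : a ≤ r) {h : ℝ → ℝ} (hh : Measurable h)
    {v : ℝ → Euc N → ℝ} (hv : IsEntireSolution J g h β v) {t : ℝ} {w : Lp ℝ p (wMeasure ρ)}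
    (hw : w =ᵐ[wMeasure ρ] v t) (τ : ℝ) : w ∈ procSet p ρ J g h β r t τ := by
  have v_memLp (s : ℝ) : MemLp (v s) p (wMeasure ρ) :=
    hv.memLp (wMeasure_absolutelyContinuous ρ) hga s
  have v_memWLp (s : ℝ) : MemWLp p.toReal ρ (v s) :=
    (memWLp_iff_memLp hρ hρpos hp₀ hp).2 (v_memLp s)
  refine ⟨v, v τ, v_memWLp τ, ?_, fun s _ => v_memWLp s, hv.isSolution hJ hg hga hh τ, hw⟩
  rw [← lpNorm_wMeasure hρ (fun x => (hρpos x).le) hp₀ hp (v_memLp τ).1]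
  exact (lpNorm_le_of_norm_le hp₀ ((abs_nonneg _).trans (hga 0)) (hv.abs_le hga τ)).trans har

variable [Fact (1 ≤ p)]

theorem mem_attrSet_of_forall_mem_procSet {h : ℝ → ℝ} {t : ℝ} {w : Lp ℝ p (wMeasure ρ)}
    (hw : ∀ τ, w ∈ procSet p ρ J g h β r t τ) : w ∈ attrSet p ρ J g h β r t :=
  mem_iInter₂.2 fun s _ => subset_closure (mem_iUnion₂.2 ⟨s, self_mem_Iic, hw s⟩)

theorem exists_mem_procSet_dist_lt {h : ℝ → ℝ} {t : ℝ} {w : Lp ℝ p (wMeasure ρ)}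
    (hw : w ∈ attrSet p ρ J g h β r t) (T : ℝ) {δ : ℝ} (hδ : 0 < δ) :
    ∃ τ ≤ T, ∃ w' ∈ procSet p ρ J g h β r t τ, dist w w' < δ := by
  have w_mem_closure := mem_iInter₂.1 hw (min t T) (min_le_left t T)
  obtain ⟨w', hw', w'_dist⟩ := Metric.mem_closure_iff.1 w_mem_closure δ hδ
  obtain ⟨τ, hτ, w'_mem⟩ := mem_iUnion₂.1 hw'
  exact ⟨τ, (mem_Iic.1 hτ).trans (min_le_right t T), w', w'_mem, w'_dist⟩

variable [IsProbabilityMeasure (wMeasure ρ)]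

theorem exists_subseq_tendsto_of_mem_procSet (hp : p ≠ ⊤) (hρ : Continuous ρ)
    (hρpos : ∀ x, 0 < ρ x) (hJ : Continuous J) (hJc : HasCompactSupport J) (hg : Continuous g)
    (hga : ∀ s, |g s| ≤ a) (har : a ≤ r) {h : ℕ → ℝ → ℝ} {h₀ : ℝ → ℝ}
    (hh : ∀ n, Measurable (h n)) (hh₀ : ∀ s, Tendsto (fun n => h n s) atTop (𝓝 (h₀ s)))
    {τ : ℕ → ℝ} (hτ : Tendsto τ atTop atBot) {t : ℝ} {w : ℕ → Lp ℝ p (wMeasure ρ)}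
    (hw : ∀ n, w n ∈ procSet p ρ J g (h n) β r t (τ n)) :
    ∃ w₀ ∈ attrSet p ρ J g h₀ β r t, ∃ φ : ℕ → ℕ, StrictMono φ ∧
      Tendsto (w ∘ φ) atTop (𝓝 w₀) := by
  have hp₁ : 1 ≤ p := Fact.out
  have J_int : Integrable J := hJ.integrable_of_hasCompactSupport hJc
  choose uτ u hu huτ hr hwu using fun n =>
    exists_isTrajectory_of_mem_procSet hp₁ hp hρ hρpos hJ hJc (hw n)
  choose C hC₀ hC using exists_abs_conv_le_mul_integral hρ hρpos hJ hJc
  have conv_initial_le (n : ℕ) (x : Euc N) : |conv J (uτ n) x| ≤ C x * r :=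
    (hC x _ ((huτ n).integrable hp₁)).trans <| mul_le_mul_of_nonneg_left
      ((integral_norm_le_lpNorm hp₁ (huτ n)).trans (hr n)) (hC₀ x)
  obtain ⟨φ, hφ, v, hv, response_lim⟩ :=
    exists_subseq_tendsto_isEntireSolution J_int hg hga hh hh₀ hτ hu conv_initial_le
  have v_memLp : MemLp (v t) p (wMeasure ρ) :=
    hv.memLp (wMeasure_absolutelyContinuous ρ) hga t
  refine ⟨v_memLp.toLp, mem_attrSet_of_forall_mem_procSet <|
    hv.mem_procSet (zero_lt_one.trans_le hp₁).ne' hp hρ.measurable hρpos J_int hg.measurable hga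
      har (measurable_of_tendsto_metrizable hh (tendsto_pi_nhds.2 hh₀)) v_memLp.coeFn_toLp,
    φ, hφ, (Lp.tendsto_Lp_iff_tendsto_eLpNorm _ _ v_memLp).2 ?_⟩
  refine (tendsto_eLpNorm_sub_of_tendsto_response (wMeasure_absolutelyContinuous ρ) hp₁ hp hga
    (hτ.comp hφ.tendsto_atTop) (fun n => hu (φ n)) (fun n => huτ (φ n)) (fun n => hr (φ n))
    (response_lim t)).congr fun n => ?_
  exact eLpNorm_congr_ae ((hwu (φ n)).symm.sub .rfl)

theorem exists_subseq_tendsto_of_mem_attrSet (hp : p ≠ ⊤) (hρ : Continuous ρ)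
    (hρpos : ∀ x, 0 < ρ x) (hJ : Continuous J) (hJc : HasCompactSupport J) (hg : Continuous g)
    (hga : ∀ s, |g s| ≤ a) (har : a ≤ r) {h : ℕ → ℝ → ℝ} {h₀ : ℝ → ℝ}
    (hh : ∀ n, Measurable (h n)) (hh₀ : ∀ s, Tendsto (fun n => h n s) atTop (𝓝 (h₀ s)))
    {t : ℝ} {w : ℕ → Lp ℝ p (wMeasure ρ)} (hw : ∀ n, w n ∈ attrSet p ρ J g (h n) β r t) :
    ∃ w₀ ∈ attrSet p ρ J g h₀ β r t, ∃ φ : ℕ → ℕ, StrictMono φ ∧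
      Tendsto (w ∘ φ) atTop (𝓝 w₀) := by
  choose τ hτ w' hw' w'_dist using fun n : ℕ =>
    exists_mem_procSet_dist_lt (hw n) (-n) (Nat.one_div_pos_of_nat (α := ℝ) (n := n))
  have τ_lim : Tendsto τ atTop atBot :=
    tendsto_atBot_mono hτ (tendsto_neg_atTop_atBot.comp tendsto_natCast_atTop_atTop)
  obtain ⟨w₀, hw₀, φ, hφ, w'_lim⟩ :=
    exists_subseq_tendsto_of_mem_procSet hp hρ hρpos hJ hJc hg hga har hh hh₀ τ_lim hw'
  have dist_lim : Tendsto (fun n => dist (w' n) (w n)) atTop (𝓝 0) :=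
    squeeze_zero (fun _ => dist_nonneg) (fun n => (dist_comm _ _).trans_le (w'_dist n).le)
      tendsto_one_div_add_atTop_nhds_zero_nat
  exact ⟨w₀, hw₀, φ, hφ, w'_lim.congr_dist (dist_lim.comp hφ.tendsto_atTop)⟩

end Attractors

theorem eventually_nhdsGT_iff_exists_forall_Ioc {P : ℝ → Prop} {b : ℝ} :
    (∀ᶠ x in 𝓝[>] b, P x) ↔ ∃ c > b, ∀ x ∈ Ioc b c, P x :=
  mem_nhdsGT_iff_exists_Ioc_subset

theorem tendsto_nhdsGT_iff_exists_forall_Ioc {f : ℝ → ℝ} {b y : ℝ} :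
    Tendsto f (𝓝[>] b) (𝓝 y) ↔ ∀ δ > 0, ∃ c > b, ∀ x ∈ Ioc b c, |f x - y| < δ := by
  simp only [Metric.tendsto_nhds, Real.dist_eq, eventually_nhdsGT_iff_exists_forall_Ioc]

theorem hasCompactSupport_of_forall_norm_gt {E F : Type*} [NormedAddCommGroup E] [ProperSpace E]
    [Zero F] {f : E → F} {R : ℝ} (hf : ∀ x, R < ‖x‖ → f x = 0) : HasCompactSupport f :=
  .intro (isCompact_closedBall 0 R) fun x hx =>
    hf x (not_le.1 fun hx' => hx (mem_closedBall_zero_iff.2 hx'))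

theorem stmt16_general {N : ℕ} (p : ℝ≥0∞) [Fact (1 ≤ p)] (hp : p ≠ ⊤)
    (ρ : Euc N → ℝ) (hρ : Continuous ρ) (hρpos : ∀ x, 0 < ρ x) (hρ1 : ∫ x, ρ x = 1) (β : ℝ)
    (J : Euc N → ℝ) (hJ : Continuous J) (hJc : HasCompactSupport J)
    (g : ℝ → ℝ) (hg : Continuous g) (a r : ℝ) (hga : ∀ s, |g s| ≤ a) (har : a ≤ r)
    {ι : Type*} (l : Filter ι) [l.IsCountablyGenerated] (h : ι → ℝ → ℝ) (h₀ : ℝ → ℝ)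
    (hh : ∀ᶠ i in l, Measurable (h i)) (hh₀ : ∀ s, Tendsto (fun i => h i s) l (𝓝 (h₀ s)))
    (t δ : ℝ) (hδ : 0 < δ) :
    ∀ᶠ i in l, ∀ w ∈ attrSet p ρ J g (h i) β r t,
      Metric.infDist w (attrSet p ρ J g h₀ β r t) < δ := by
  have := isProbabilityMeasure_wMeasure (fun x => (hρpos x).le) hρ1
  by_contra not_eventually_close
  obtain ⟨i, i_lim, hi⟩ := exists_seq_forall_of_frequently
    ((not_eventually.1 not_eventually_close).and_eventually hh)
  choose w hw w_far using fun n => not_forall₂.1 (hi n).1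
  obtain ⟨w₀, hw₀, φ, -, w_lim⟩ := exists_subseq_tendsto_of_mem_attrSet hp hρ hρpos hJ hJc hg hga
    har (fun n => (hi n).2) (fun s => (hh₀ s).comp i_lim) hw
  obtain ⟨n, w_near⟩ := (w_lim.eventually_mem (Metric.ball_mem_nhds w₀ hδ)).exists
  exact w_far (φ n) ((Metric.infDist_le_dist_of_mem hw₀).trans_lt w_near)

theorem stmt16 {N : ℕ} (p : ℝ≥0∞) [Fact (1 ≤ p)] (hp : p ≠ ⊤)
    (ρ : Euc N → ℝ) (hρc : Continuous ρ) (hρpos : ∀ x, 0 < ρ x) (hρ1 : ∫ x, ρ x = 1)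
    (K : ℝ) (hK : 0 < K) (hKρ : ∀ y x : Euc N, ‖x - y‖ ≤ 1 → ρ x ≤ K * ρ y)
    (β : ℝ) (hβ : 0 < β)
    (J : Euc N → ℝ) (hJC1 : ContDiff ℝ 1 J) (hJnn : ∀ x, 0 ≤ J x)
    (hJeven : ∀ x, J (-x) = J x)
    (hJsupp : ∀ x : Euc N, 1 < ‖x‖ → J x = 0) (hJ1 : ∫ x, J x = 1)
    (g : ℝ → ℝ) (hgC1 : ContDiff ℝ 1 g) (hg0 : g 0 = 0)
    (a : ℝ) (hga : ∀ s, |g s| ≤ a)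
    (ℓg : ℝ) (hgLip : ∀ s₁ s₂, |g s₁ - g s₂| ≤ ℓg * |s₁ - s₂|)
    (k₁ : ℝ) (hg'Lip : ∀ s₁ s₂, |deriv g s₁ - deriv g s₂| ≤ k₁ * |s₁ - s₂|)
    (hstar : ℝ) (h : ℝ → ℝ → ℝ)
    (hhreg : ∀ ε ∈ Icc (0 : ℝ) 1, Continuous (h ε) ∧ ∀ t, h ε t ∈ Ico (0 : ℝ) hstar)
    (hconv : ∀ δ > 0, ∃ ε₀ > 0, ∀ ε ∈ Ioc (0 : ℝ) ε₀, ∀ t, |h ε t - h 0 t| < δ)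
    (t : ℝ) :
    ∀ δ > 0, ∃ ε₀ > 0, ∀ ε ∈ Ioc (0 : ℝ) ε₀,
      ∀ w ∈ attrSet p ρ J g (h ε) β (a + 1) t,
        Metric.infDist w (attrSet p ρ J g (h 0) β (a + 1) t) < δ := by
  exact fun δ hδ => eventually_nhdsGT_iff_exists_forall_Ioc.1 <|
    stmt16_general p hp ρ hρc hρpos hρ1 β J hJC1.continuous
      (hasCompactSupport_of_forall_norm_gt hJsupp) g hgC1.continuous a (a + 1) hga
      (le_add_of_nonneg_right zero_le_one) (𝓝[>] 0) h (h 0)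
      (eventually_nhdsGT_iff_exists_forall_Ioc.2
        ⟨1, one_pos, fun ε hε => (hhreg ε (Ioc_subset_Icc_self hε)).1.measurable⟩)
      (fun s => tendsto_nhdsGT_iff_exists_forall_Ioc.2 fun η hη =>
        (hconv η hη).imp fun _ hε₀ => ⟨hε₀.1, fun ε hε => hε₀.2 ε hε s⟩) t δ hδ
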